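/- Given a solution of the two-component BKP hierarchy in Lax form (∂Φ/∂t_k = −(P^k)₋Φ, ∂Ψ/∂t_k = ((P^k)₊ − δ_{k1}Q^{-1})Ψ, ∂Φ/∂t̂_k = −(Q^k)₋Φ, ∂Ψ/∂t̂_k = (Q^k)₊Ψ for odd k), the 1-form ω = ∑_{k odd ≥ 1} (res(P^k) dt_k + res(Q^k) dt̂_k) is closed: ∂/∂t_l res(P^k) = ∂/∂t_k res(P^l), ∂/∂t̂_l res(P^k) = ∂/∂t_k res(Q^l), and ∂/∂t̂_l res(Q^k) = ∂/∂t̂_k res(Q^l) modulo the symmetry required for closedness. -/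

import Mathlib

/-!
# Closedness of the residue one-form of the two-component BKP hierarchy

Give the coefficient of `D^i` in degree `j` the weight `-i` in `D⁻` and `i + j` in `D⁺`. The product
never lowers the sum of the weights, and for operators of weight bounded below only finitely many
terms contribute to each of its coefficients. Modulo terms of large weight or degree an operator
is a finite sum of monomials `x D^i`, so associativity (`Op.mul_assoc_aux`) reduces to monomials,
where it is the Leibniz rule together with Vandermonde's identity (`monomial_assoc_identity`). Hence
`D⁻` and `D⁺` are rings, on which the flows act as derivations (`Op.map_mul`).

In either ring, a flow `e φ = B φ` gives `e (xⁿ) = [B, xⁿ]` for the dressed operator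
`x = φ D^k φ⁻¹` (`Op.map_dressed_pow`). The residue of a product of two differential operators, or
of two negative operators, vanishes, and therefore

* `e Φ = -z₋ Φ` implies `e (res Pⁿ) = res [(Pⁿ)₊, z₋]`;
* `e Ψ = (z₊ - C) Ψ` with `C` commuting with `Q` implies `e (res Qⁿ) = res [z₊, (Qⁿ)₋]`.

The extra term `Q⁻¹ = Ψ D Ψ⁻¹` of the first flow is such a `C`. The mixed identity follows by
comparing the two formulas: both sides are `res [(P^k)₊, (Q^l)₋]`, a commutator of a differential
operator and a negative one, whose coefficients make sense although the two operators need not lie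
in a common ring. The unmixed identities follow from `res [P^k, P^l] = 0` and `res [Q^k, Q^l] = 0`,
split into nonnegative and negative parts (`Op.res_commute`).
-/

open scoped BigOperators

/-- Generalized binomial coefficient `C(i,r) = i(i-1)⋯(i-r+1)/r!` for `i : ℤ`, `r : ℕ`. -/
noncomputable def zchoose (i : ℤ) (r : ℕ) : ℤ :=
  (∏ k ∈ Finset.range r, (i - (k : ℤ))) / (r.factorial : ℤ)

/-- A derivation of a commutative ring: additive and Leibniz. -/
def IsDeriv {A : Type*} [CommRing A] (d : A → A) : Prop :=
  (∀ x y, d (x + y) = d x + d y) ∧ (∀ x y, d (x * y) = d x * y + x * d y)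

section FirstType

variable {A : Type*} [CommRing A]

/-- Coefficients supported on `{i ≤ N}` for some `N`: pseudo-differential operators of the
first type `∑_{i ≤ N} f_i D^i` are represented by their coefficient functions `ℤ → A`. -/
def BddAboveSupp (f : ℤ → A) : Prop := ∃ N : ℤ, ∀ i : ℤ, N < i → f i = 0

/-- Coefficient of `D^s` in the product `(∑ f_i D^i)·(∑ g_j D^j)
 = ∑_{i,j,r≥0} C(i,r) f_i D^r(g_j) D^{i+j-r}` (here `r = i + j - s ≥ 0`). -/
noncomputable def mulM (d : A → A) (f g : ℤ → A) : ℤ → A :=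
  fun s => ∑ᶠ p : ℤ × ℤ,
    if s ≤ p.1 + p.2 then
      zchoose p.1 (p.1 + p.2 - s).toNat • (f p.1 * d^[(p.1 + p.2 - s).toNat] (g p.2))
    else 0

def oneM : ℤ → A := fun i => if i = 0 then 1 else 0

noncomputable def powM (d : A → A) (f : ℤ → A) : ℕ → ℤ → A
  | 0 => oneM
  | n + 1 => mulM d f (powM d f n)

/-- Formal adjoint `(∑ f_i D^i)* = ∑ (-1)^i D^i ∘ f_i` in coefficient form. -/
noncomputable def adjM (d : A → A) (f : ℤ → A) : ℤ → A :=
  fun s => ∑ᶠ r : ℕ,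
    (if Even (s + (r : ℤ)) then zchoose (s + (r : ℤ)) r else -zchoose (s + (r : ℤ)) r) •
      d^[r] (f (s + (r : ℤ)))

/-- Nonnegative (differential-operator) part. -/
def posM (f : ℤ → A) : ℤ → A := fun i => if 0 ≤ i then f i else 0

/-- Strictly negative part. -/
def negM (f : ℤ → A) : ℤ → A := fun i => if i < 0 then f i else 0

/-- Action of a differential operator `∑_{i ≥ 0} f_i D^i` on an element of `A`. -/
noncomputable def actM (d : A → A) (f : ℤ → A) (x : A) : A :=
  ∑ᶠ i : ℕ, f (i : ℤ) * d^[i] x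

/-- The monomial `D^k`. -/
def Dk (k : ℤ) : ℤ → A := fun i => if i = k then 1 else 0

/-- `D^{-1}`. -/
def Dinv : ℤ → A := Dk (-1)

/-- A scalar `u ∈ A` viewed as an operator of order `0`. -/
def cst (u : A) : ℤ → A := fun i => if i = 0 then u else 0

/-- The Drinfeld–Sokolov operator
`L = D^{2n-2} + ∑_{i=1}^{n-1} D^{-1}(u^i D^{2i-1} + D^{2i-1} u^i) + D^{-1} ρ D^{-1} ρ`. -/
noncomputable def LM (d : A → A) (n : ℕ) (u : Fin (n - 1) → A) (ρ : A) : ℤ → A :=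
  fun s =>
    Dk (2 * (n : ℤ) - 2) s
      + (∑ i : Fin (n - 1),
          mulM d Dinv
            (fun t => mulM d (cst (u i)) (Dk (2 * ((i : ℕ) : ℤ) + 1)) t
                + mulM d (Dk (2 * ((i : ℕ) : ℤ) + 1)) (cst (u i)) t) s)
      + mulM d Dinv (mulM d (cst ρ) (mulM d Dinv (cst ρ))) s

end FirstType

section SecondType

variable {A : Type*} [CommRing A]

/-- Operators over a graded ring, in bi-graded coefficient form: `a i j` is the coefficient
of `D^i` lying in the degree-`j` graded component, so the operator is `∑_{i,j} a_{i,j} D^i`. -/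
abbrev OpC (A : Type*) := ℤ → ℕ → A

/-- Product of operators in bi-graded coefficient form:
`A·B = ∑ C(i,r) a_{i,p} D^r(b_{j,q}) D^{i+j-r}`; the `(s,t)` coefficient collects
`i + j - r = s` and `p + r + q = t`. -/
noncomputable def mulO (d : A → A) (a b : OpC A) : OpC A :=
  fun s t => ∑ᶠ (i : ℤ) (p : ℕ) (r : ℕ) (q : ℕ),
    if p + r + q = t then zchoose i r • (a i p * d^[r] (b (s + (r : ℤ) - i) q)) else 0

def oneO : OpC A := fun i j => if i = 0 ∧ j = 0 then 1 else 0

noncomputable def powO (d : A → A) (a : OpC A) : ℕ → OpC A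
  | 0 => oneO
  | n + 1 => mulO d a (powO d a n)

/-- Formal adjoint `A* = ∑ (-1)^i D^i ∘ a_{i,j}` in bi-graded coefficient form. -/
noncomputable def adjO (d : A → A) (a : OpC A) : OpC A :=
  fun s t => ∑ r ∈ Finset.range (t + 1),
    (if Even (s + (r : ℤ)) then zchoose (s + (r : ℤ)) r else -zchoose (s + (r : ℤ)) r) •
      d^[r] (a (s + (r : ℤ)) (t - r))

def posO (a : OpC A) : OpC A := fun i j => if 0 ≤ i then a i j else 0

def negO (a : OpC A) : OpC A := fun i j => if i < 0 then a i j else 0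

def DkO (k : ℤ) : OpC A := fun i j => if i = k ∧ j = 0 then 1 else 0

def DopO : OpC A := DkO 1

def DinvO : OpC A := DkO (-1)

/-- A scalar, given by its graded components `fc j ∈ A_j`, as an operator of order `0`. -/
def scalarO (fc : ℕ → A) : OpC A := fun i j => if i = 0 then fc j else 0

/-- The components of `1 ∈ A`. -/
def unitC : ℕ → A := fun j => if j = 0 then (1 : A) else 0

/-- Action of a differential operator on an element of `A` given by graded components. -/
noncomputable def actO (d : A → A) (a : OpC A) (fc : ℕ → A) : ℕ → A :=
  fun t => ∑ i ∈ Finset.range (t + 1), ∑ j ∈ Finset.range (t + 1), ∑ p ∈ Finset.range (t + 1),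
    if i + j + p = t then a (i : ℤ) j * d^[i] (fc p) else 0

/-- Gradedness: `a i j` lies in the degree-`j` component. -/
def IsGradedO (𝒜 : ℕ → AddSubgroup A) (a : OpC A) : Prop := ∀ i j, a i j ∈ 𝒜 j

/-- Membership in `D⁺`: `∃ m`, support in `{(i,j) : j ≥ max(0, m - i)}`. -/
def InPlusO (a : OpC A) : Prop := ∃ m : ℤ, ∀ (i : ℤ) (j : ℕ), (j : ℤ) < m - i → a i j = 0

/-- Membership in `D⁻`: `∃ N`, support in `{(i,j) : i ≤ N}`. -/
def InMinusO (a : OpC A) : Prop := ∃ N : ℤ, ∀ (i : ℤ) (j : ℕ), N < i → a i j = 0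

/-- A differential operator: no negative powers of `D`. -/
def IsDiffOpO (a : OpC A) : Prop := ∀ i : ℤ, i < 0 → ∀ j, a i j = 0

/-- Apply a map (e.g. a time derivation) to all coefficients. -/
def opMapO {A : Type*} (e : A → A) (a : OpC A) : OpC A := fun i j => e (a i j)

/-- Commutator. -/
noncomputable def commO (d : A → A) (a b : OpC A) : OpC A :=
  fun i j => mulO d a b i j - mulO d b a i j

/-- The Drinfeld–Sokolov operator `L` in bi-graded coefficient form. -/
noncomputable def LO (d : A → A) (n : ℕ) (uc : Fin (n - 1) → ℕ → A) (ρc : ℕ → A) : OpC A :=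
  fun s t =>
    DkO (2 * (n : ℤ) - 2) s t
      + (∑ i : Fin (n - 1),
          mulO d DinvO
            (fun s' t' => mulO d (scalarO (uc i)) (DkO (2 * ((i : ℕ) : ℤ) + 1)) s' t'
                + mulO d (DkO (2 * ((i : ℕ) : ℤ) + 1)) (scalarO (uc i)) s' t') s t)
      + mulO d DinvO (mulO d (scalarO ρc) (mulO d DinvO (scalarO ρc))) s t

end SecondType

/-! ### Generalized binomial coefficients and the iterated Leibniz rule -/

lemma zchoose_eq (i : ℤ) (r : ℕ) : zchoose i r = Ring.choose i r := by
  have h := Ring.descPochhammer_eq_factorial_smul_choose i r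
  rw [← Polynomial.eval_eq_smeval, descPochhammer_eval_eq_prod_range] at h
  rw [zchoose, h, nsmul_eq_mul]
  exact Int.mul_ediv_cancel_left _ (by exact_mod_cast r.factorial_ne_zero)

lemma zchoose_zero_right (i : ℤ) : zchoose i 0 = 1 := by
  simp [zchoose_eq]

lemma zchoose_eq_zero {i : ℤ} {r : ℕ} (h0 : 0 ≤ i) (h : i < r) : zchoose i r = 0 := by
  lift i to ℕ using h0
  rw [zchoose_eq, Ring.choose_natCast, Nat.choose_eq_zero_of_lt (by exact_mod_cast h)]
  simp

namespace IsDeriv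

variable {A : Type*} [CommRing A] {d : A → A}

/-- The `n`-th iterate of a derivation as an additive map. -/
def iter (hd : IsDeriv d) (n : ℕ) : A →+ A :=
  AddMonoidHom.mk' (d^[n]) fun x y => by
    induction n generalizing x y with
    | zero => rfl
    | succ n ih => simp only [Function.iterate_succ_apply, hd.1, ih]

lemma iter_apply (hd : IsDeriv d) (n : ℕ) (x : A) : d^[n] x = hd.iter n x := rfl

lemma iter_zero (hd : IsDeriv d) (n : ℕ) : d^[n] 0 = 0 := map_zero (hd.iter n)

lemma map_zero (hd : IsDeriv d) : d 0 = 0 := hd.iter_zero 1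

lemma map_one (hd : IsDeriv d) : d 1 = 0 := by
  have := hd.2 1 1
  simpa using this

lemma iter_one (hd : IsDeriv d) {n : ℕ} (hn : n ≠ 0) : d^[n] 1 = 0 := by
  obtain ⟨m, rfl⟩ := Nat.exists_eq_succ_of_ne_zero hn
  rw [Function.iterate_succ_apply, hd.map_one, hd.iter_zero]

lemma iter_mul (hd : IsDeriv d) (n : ℕ) (x y : A) :
    d^[n] (x * y)
      = ∑ ij ∈ Finset.HasAntidiagonal.antidiagonal n,
          (n.choose ij.1 : A) * (d^[ij.1] x * d^[ij.2] y) := by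
  induction n with
  | zero => simp
  | succ n ih =>
    rw [Finset.sum_antidiagonal_choose_succ_mul (fun i j => d^[i] x * d^[j] y),
      Function.iterate_succ_apply', ih, ← Function.iterate_one d, hd.iter_apply 1, map_sum,
      ← Finset.sum_add_distrib]
    refine Finset.sum_congr rfl fun ij hij => ?_
    rw [Nat.choose_symm_of_eq_add (Finset.HasAntidiagonal.mem_antidiagonal.1 hij).symm, ← mul_add,
      ← nsmul_eq_mul, map_nsmul, nsmul_eq_mul, ← hd.iter_apply, Function.iterate_one, hd.2,
      Function.iterate_succ_apply', Function.iterate_succ_apply']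
    ring

end IsDeriv

/-- The coefficient identity behind `(f D^i · g D^k) · h D^l = f D^i · (g D^k · h D^l)`. It follows
from the Leibniz rule, `C(i,r+x) C(r+x,r) = C(i,r) C(i-r,x)` and Vandermonde's identity. -/
lemma monomial_assoc_identity {A : Type*} [CommRing A] {d : A → A} (hd : IsDeriv d)
    (i k : ℤ) (n : ℕ) (f g h : A) :
    ∑ ru ∈ Finset.HasAntidiagonal.antidiagonal n,
        zchoose (i + k - ru.1) ru.2 • ((zchoose i ru.1 • (f * d^[ru.1] g)) * d^[ru.2] h)
      = ∑ wy ∈ Finset.HasAntidiagonal.antidiagonal n,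
        zchoose i wy.1 • (f * d^[wy.1] (zchoose k wy.2 • (g * d^[wy.2] h))) := by
  have key : ∀ wy : ℕ × ℕ, zchoose i wy.1 • (f * d^[wy.1] (zchoose k wy.2 • (g * d^[wy.2] h)))
      = ∑ rx ∈ Finset.HasAntidiagonal.antidiagonal wy.1,
        ((Ring.choose i rx.1 * (Ring.choose (i - rx.1) rx.2 * Ring.choose k wy.2) : ℤ) : A)
          * (f * d^[rx.1] g * d^[rx.2 + wy.2] h) := by
    rintro ⟨w, y⟩
    rw [hd.iter_apply, map_zsmul, ← hd.iter_apply, hd.iter_mul,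
      Finset.smul_sum, Finset.mul_sum, Finset.smul_sum]
    refine Finset.sum_congr rfl fun rx hrx => ?_
    have hw : rx.1 + rx.2 = w := Finset.HasAntidiagonal.mem_antidiagonal.1 hrx
    have hc := Ring.choose_smul_choose i (n := w) (k := rx.1) (by omega)
    rw [show w - rx.1 = rx.2 by omega] at hc
    rw [← mul_assoc (Ring.choose i rx.1), ← hc, zchoose_eq, zchoose_eq,
      ← Function.iterate_add_apply]
    simp only [zsmul_eq_mul, nsmul_eq_mul]
    push_cast
    ring
  simp only [key]
  have L : ∀ ru : ℕ × ℕ,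
      zchoose (i + k - ru.1) ru.2 • ((zchoose i ru.1 • (f * d^[ru.1] g)) * d^[ru.2] h)
      = ∑ xy ∈ Finset.HasAntidiagonal.antidiagonal ru.2,
        ((Ring.choose i ru.1 * (Ring.choose (i - ru.1) xy.1 * Ring.choose k xy.2) : ℤ) : A)
          * (f * d^[ru.1] g * d^[xy.1 + xy.2] h) := by
    rintro ⟨r, u⟩
    have : ∀ xy ∈ Finset.HasAntidiagonal.antidiagonal u,
        ((Ring.choose i r * (Ring.choose (i - r) xy.1 * Ring.choose k xy.2) : ℤ) : A)
          * (f * d^[r] g * d^[xy.1 + xy.2] h)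
        = ((Ring.choose i r * (Ring.choose (i - r) xy.1 * Ring.choose k xy.2) : ℤ) : A)
          * (f * d^[r] g * d^[u] h) := fun xy hxy => by
      rw [Finset.HasAntidiagonal.mem_antidiagonal.1 hxy]
    rw [Finset.sum_congr rfl this, ← Finset.sum_mul, ← Int.cast_sum, ← Finset.mul_sum,
      ← Ring.add_choose_eq u (Commute.all (i - r : ℤ) k), zchoose_eq, zchoose_eq,
      show i - r + k = i + k - r by ring]
    simp only [zsmul_eq_mul]
    push_cast
    ring
  simp only [L]
  rw [Finset.sum_sigma', Finset.sum_sigma']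
  refine Finset.sum_nbij' (fun z => ⟨(z.1.1 + z.2.1, z.2.2), (z.1.1, z.2.1)⟩)
    (fun z => ⟨(z.2.1, z.2.2 + z.1.2), (z.2.2, z.1.2)⟩) ?_ ?_ ?_ ?_ ?_
  · rintro ⟨⟨a, b⟩, ⟨c, e⟩⟩ h
    simp only [Finset.mem_sigma, Finset.HasAntidiagonal.mem_antidiagonal] at h ⊢
    obtain ⟨h1, h2⟩ := h
    exact ⟨by omega, trivial⟩
  · rintro ⟨⟨a, b⟩, ⟨c, e⟩⟩ h
    simp only [Finset.mem_sigma, Finset.HasAntidiagonal.mem_antidiagonal] at h ⊢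
    obtain ⟨h1, h2⟩ := h
    exact ⟨by omega, trivial⟩
  · rintro ⟨⟨a, b⟩, ⟨c, e⟩⟩ h
    simp only [Finset.mem_sigma, Finset.HasAntidiagonal.mem_antidiagonal] at h
    obtain ⟨h1, rfl⟩ := h
    rfl
  · rintro ⟨⟨a, b⟩, ⟨c, e⟩⟩ h
    simp only [Finset.mem_sigma, Finset.HasAntidiagonal.mem_antidiagonal] at h
    obtain ⟨h1, rfl⟩ := h
    rfl
  · rintro ⟨⟨a, b⟩, ⟨c, e⟩⟩ h
    rfl

/-! ### The product as a finite sum -/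

/-- Triples of degrees `(p, r, q)` with `p + r + q = t`. -/
def degTriples (t : ℕ) : Finset (ℕ × ℕ × ℕ) :=
  (Finset.range (t + 1) ×ˢ Finset.range (t + 1) ×ˢ Finset.range (t + 1)).filter
    fun x => x.1 + x.2.1 + x.2.2 = t

lemma mem_degTriples {t : ℕ} {x : ℕ × ℕ × ℕ} :
    x ∈ degTriples t ↔ x.1 + x.2.1 + x.2.2 = t := by
  simp only [degTriples, Finset.mem_filter, Finset.mem_product, Finset.mem_range]
  omega

lemma finsum_eq_sum_range {M : Type*} [AddCommMonoid M] (t : ℕ) (f : ℕ → M)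
    (h : ∀ n, t < n → f n = 0) : ∑ᶠ n, f n = ∑ n ∈ Finset.range (t + 1), f n := by
  refine finsum_eq_sum_of_support_subset _ fun n hn => ?_
  by_contra hc
  exact hn (h n (by simpa using hc))

section Product

variable {A : Type*} [CommRing A] {d : A → A}

/-- The summand of `mulO` with exponent `i` on the left and degrees `x = (p, r, q)`. -/
noncomputable def mulTerm (d : A → A) (a b : OpC A) (s i : ℤ) (x : ℕ × ℕ × ℕ) : A :=
  zchoose i x.2.1 • (a i x.1 * d^[x.2.1] (b (s + (x.2.1 : ℤ) - i) x.2.2))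

lemma mulO_eq_finsum (a b : OpC A) (s : ℤ) (t : ℕ) :
    mulO d a b s t = ∑ᶠ i : ℤ, ∑ x ∈ degTriples t, mulTerm d a b s i x := by
  refine finsum_congr fun i => ?_
  rw [degTriples, Finset.sum_filter, Finset.sum_product, finsum_eq_sum_range t]
  · refine Finset.sum_congr rfl fun p _ => ?_
    rw [Finset.sum_product, finsum_eq_sum_range t]
    · refine Finset.sum_congr rfl fun r _ => ?_
      rw [finsum_eq_sum_range t]
      · rfl
      · intro q hq
        rw [if_neg (by omega)]
    · intro r hr
      simp only [show ∀ q, ¬ p + r + q = t by omega, if_false, finsum_zero]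
  · intro p hp
    simp only [show ∀ r q, ¬ p + r + q = t by omega, if_false, finsum_zero]

lemma mulTerm_eq_zero (hd : IsDeriv d) {a b : OpC A} {s i : ℤ} {x : ℕ × ℕ × ℕ}
    (h : a i x.1 = 0 ∨ b (s + (x.2.1 : ℤ) - i) x.2.2 = 0 ∨ zchoose i x.2.1 = 0) :
    mulTerm d a b s i x = 0 := by
  rcases h with h | h | h
  · simp [mulTerm, h]
  · simp [mulTerm, h, hd.iter_zero]
  · simp [mulTerm, h]

lemma mulO_eq_sum (a b : OpC A) (s : ℤ) (t : ℕ) (I : Finset ℤ)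
    (h : ∀ i ∉ I, ∀ x ∈ degTriples t, mulTerm d a b s i x = 0) :
    mulO d a b s t = ∑ i ∈ I, ∑ x ∈ degTriples t, mulTerm d a b s i x := by
  rw [mulO_eq_finsum]
  refine finsum_eq_sum_of_support_subset _ fun i hi => ?_
  by_contra hc
  exact hi (Finset.sum_eq_zero fun x hx => h i (by simpa using hc) x hx)

lemma mulO_eq_zero (a b : OpC A) (s : ℤ) (t : ℕ)
    (h : ∀ i, ∀ x ∈ degTriples t, mulTerm d a b s i x = 0) : mulO d a b s t = 0 := by
  rw [mulO_eq_sum a b s t ∅ fun i _ => h i, Finset.sum_empty]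

/-- The `(s, t)` coefficient of a product involves the factors in degrees `≤ t` only. -/
lemma mulO_congr {a a' b b' : OpC A} (s : ℤ) (t : ℕ) (ha : ∀ i, ∀ j ≤ t, a i j = a' i j)
    (hb : ∀ i, ∀ j ≤ t, b i j = b' i j) : mulO d a b s t = mulO d a' b' s t := by
  rw [mulO_eq_finsum, mulO_eq_finsum]
  refine finsum_congr fun i => Finset.sum_congr rfl fun x hx => ?_
  rw [mem_degTriples] at hx
  rw [mulTerm, mulTerm, ha _ _ (by omega), hb _ _ (by omega)]

/-- A weight on bidegrees which is (super)additive under products: the total degree `i + j` for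
`σ = true`, adapted to `D⁺`, and `-i` for `σ = false`, adapted to `D⁻`. -/
def opWeight (σ : Bool) (i : ℤ) (j : ℕ) : ℤ := if σ then i + j else -i

/-- Operators supported in weight at least `m`. -/
def WeightGE (σ : Bool) (m : ℤ) (a : OpC A) : Prop := ∀ i j, opWeight σ i j < m → a i j = 0

/-- Operators all of whose coefficients have weight at least `M` or degree greater than `M`. -/
def HighGE (σ : Bool) (M : ℤ) (a : OpC A) : Prop :=
  ∀ i (j : ℕ), opWeight σ i j < M → (j : ℤ) ≤ M → a i j = 0

lemma inPlusO_iff (a : OpC A) : InPlusO a ↔ ∃ m, WeightGE true m a := by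
  refine exists_congr fun m => forall_congr' fun i => forall_congr' fun j => ?_
  simp only [opWeight, if_true]
  rw [lt_sub_iff_add_lt, add_comm]

lemma inMinusO_iff (a : OpC A) : InMinusO a ↔ ∃ m, WeightGE false m a := by
  constructor
  · rintro ⟨N, h⟩
    exact ⟨-N, fun i j hij => h i j (by simpa [opWeight] using hij)⟩
  · rintro ⟨m, h⟩
    exact ⟨-m, fun i j hij => h i j (by simp only [opWeight]; simp; omega)⟩

lemma opWeight_mul (σ : Bool) {s i : ℤ} {t : ℕ} {x : ℕ × ℕ × ℕ} (hx : x ∈ degTriples t) :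
    opWeight σ i x.1 + opWeight σ (s + x.2.1 - i) x.2.2 ≤ opWeight σ s t := by
  rw [mem_degTriples] at hx
  cases σ <;> simp [opWeight] <;> omega

lemma WeightGE.mono {σ : Bool} {m m' : ℤ} {a : OpC A} (h : WeightGE σ m a) (hm : m' ≤ m) :
    WeightGE σ m' a := fun i j hij => h i j (by omega)

lemma WeightGE.add {σ : Bool} {m : ℤ} {a b : OpC A} (ha : WeightGE σ m a) (hb : WeightGE σ m b) :
    WeightGE σ m (a + b) := fun i j hij => by simp [ha i j hij, hb i j hij]

lemma WeightGE.mul (hd : IsDeriv d) {σ : Bool} {m n : ℤ} {a b : OpC A} (ha : WeightGE σ m a)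
    (hb : WeightGE σ n b) : WeightGE σ (m + n) (mulO d a b) := fun s t hst => by
  refine mulO_eq_zero _ _ _ _ fun i x hx => mulTerm_eq_zero hd ?_
  have := opWeight_mul σ (s := s) (i := i) hx
  by_cases h : opWeight σ i x.1 < m
  · exact .inl (ha _ _ h)
  · exact .inr (.inl (hb _ _ (by omega)))

lemma HighGE.mul_right (hd : IsDeriv d) {σ : Bool} {M M' n : ℤ} {a b : OpC A} (ha : HighGE σ M a)
    (hb : WeightGE σ n b) (h1 : M' ≤ M) (h2 : M' ≤ M + n) : HighGE σ M' (mulO d a b) :=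
  fun s t hst ht => by
    refine mulO_eq_zero _ _ _ _ fun i x hx => mulTerm_eq_zero hd ?_
    have := opWeight_mul σ (s := s) (i := i) hx
    rw [mem_degTriples] at hx
    by_cases h : opWeight σ i x.1 < M
    · exact .inl (ha _ _ h (by omega))
    · exact .inr (.inl (hb _ _ (by omega)))

lemma HighGE.mul_left (hd : IsDeriv d) {σ : Bool} {M M' m : ℤ} {a b : OpC A} (ha : WeightGE σ m a)
    (hb : HighGE σ M b) (h1 : M' ≤ M) (h2 : M' ≤ m + M) : HighGE σ M' (mulO d a b) :=
  fun s t hst ht => by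
    refine mulO_eq_zero _ _ _ _ fun i x hx => mulTerm_eq_zero hd ?_
    have := opWeight_mul σ (s := s) (i := i) hx
    rw [mem_degTriples] at hx
    by_cases h : opWeight σ i x.1 < m
    · exact .inl (ha _ _ h)
    · exact .inr (.inl (hb _ _ (by omega) (by omega)))

/-- The exponents of the left factor which can contribute to the `(s, t)` coefficient of a product
of operators of weights at least `m` and `n`. -/
noncomputable def window (σ : Bool) (m n s : ℤ) (t : ℕ) : Finset ℤ :=
  if σ then Finset.Icc (m - t) (s + t - n) else Finset.Icc (s + n) (-m)

lemma mulO_eq_sum_window (hd : IsDeriv d) {σ : Bool} {m n : ℤ} {a b : OpC A}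
    (ha : WeightGE σ m a) (hb : WeightGE σ n b) (s : ℤ) (t : ℕ) :
    mulO d a b s t = ∑ i ∈ window σ m n s t, ∑ x ∈ degTriples t, mulTerm d a b s i x := by
  refine mulO_eq_sum _ _ _ _ _ fun i hi x hx => mulTerm_eq_zero hd ?_
  rw [mem_degTriples] at hx
  by_cases h : opWeight σ i x.1 < m
  · exact .inl (ha _ _ h)
  · refine .inr (.inl (hb _ _ ?_))
    cases σ <;> simp [window, opWeight] at hi h ⊢ <;> by_contra hc <;> push Not at hc <;>
      have := hi (by omega) <;> omega

lemma mulO_add (hd : IsDeriv d) {σ : Bool} {m n : ℤ} {a b c : OpC A} (ha : WeightGE σ m a)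
    (hb : WeightGE σ n b) (hc : WeightGE σ n c) :
    mulO d a (b + c) = mulO d a b + mulO d a c := by
  funext s t
  rw [Pi.add_apply, Pi.add_apply, mulO_eq_sum_window hd ha hb, mulO_eq_sum_window hd ha hc,
    mulO_eq_sum_window hd ha (hb.add hc), ← Finset.sum_add_distrib]
  refine Finset.sum_congr rfl fun i _ => ?_
  rw [← Finset.sum_add_distrib]
  refine Finset.sum_congr rfl fun x _ => ?_
  simp only [mulTerm, Pi.add_apply, hd.iter_apply, map_add, mul_add, smul_add]

lemma add_mulO (hd : IsDeriv d) {σ : Bool} {m n : ℤ} {a b c : OpC A} (ha : WeightGE σ m a)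
    (hb : WeightGE σ m b) (hc : WeightGE σ n c) :
    mulO d (a + b) c = mulO d a c + mulO d b c := by
  funext s t
  rw [Pi.add_apply, Pi.add_apply, mulO_eq_sum_window hd ha hc, mulO_eq_sum_window hd hb hc,
    mulO_eq_sum_window hd (ha.add hb) hc, ← Finset.sum_add_distrib]
  refine Finset.sum_congr rfl fun i _ => ?_
  rw [← Finset.sum_add_distrib]
  refine Finset.sum_congr rfl fun x _ => ?_
  simp only [mulTerm, Pi.add_apply, add_mul, smul_add]

/-- A derivation commuting with `d` acts coefficientwise as a derivation of operators. -/
lemma opMapO_mulO (hd : IsDeriv d) {e : A → A} (he : IsDeriv e) (hed : ∀ x, e (d x) = d (e x))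
    {σ : Bool} {m n : ℤ} {a b : OpC A} (ha : WeightGE σ m a) (hb : WeightGE σ n b) :
    opMapO e (mulO d a b) = mulO d (opMapO e a) b + mulO d a (opMapO e b) := by
  have ha' : WeightGE σ m (opMapO e a) := fun i j h => by rw [opMapO, ha i j h, he.map_zero]
  have hb' : WeightGE σ n (opMapO e b) := fun i j h => by rw [opMapO, hb i j h, he.map_zero]
  have hit : ∀ n x, e (d^[n] x) = d^[n] (e x) := fun n x =>
    (Function.Commute.iterate_right (show Function.Commute e d from hed) n) x
  funext s t
  rw [Pi.add_apply, Pi.add_apply, mulO_eq_sum_window hd ha' hb, mulO_eq_sum_window hd ha hb',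
    opMapO, mulO_eq_sum_window hd ha hb, ← Finset.sum_add_distrib, ← Function.iterate_one e,
    he.iter_apply 1, map_sum]
  refine Finset.sum_congr rfl fun i _ => ?_
  rw [← Finset.sum_add_distrib, map_sum]
  refine Finset.sum_congr rfl fun x _ => ?_
  rw [mulTerm, map_zsmul, ← he.iter_apply, Function.iterate_one, he.2, hit, smul_add]
  rfl

end Product

/-! ### The rings `D⁻` and `D⁺` -/

section Ring

variable {A : Type*} [CommRing A] {d : A → A}

/-- The operator `x D^i` with `x` placed in degree `p`. -/
def monoO (i : ℤ) (p : ℕ) (x : A) : OpC A := fun s t => if s = i ∧ t = p then x else 0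

lemma weightGE_monoO (σ : Bool) (i : ℤ) (p : ℕ) (x : A) :
    WeightGE σ (opWeight σ i p) (monoO i p x) := fun s t h => by
  refine if_neg ?_
  rintro ⟨rfl, rfl⟩
  exact lt_irrefl _ h

lemma mulO_monoO (hd : IsDeriv d) (i k : ℤ) (p q : ℕ) (f g : A) (s : ℤ) (t : ℕ) :
    mulO d (monoO i p f) (monoO k q g) s t
      = if p + q ≤ t ∧ s + ((t - p - q : ℕ) : ℤ) = i + k then
          zchoose i (t - p - q) • (f * d^[t - p - q] g) else 0 := by
  rw [mulO_eq_sum _ _ _ _ {i}, Finset.sum_singleton]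
  · by_cases hpq : p + q ≤ t
    · rw [Finset.sum_eq_single (p, t - p - q, q)]
      · simp only [mulTerm, monoO, true_and, and_true, hpq, if_true]
        by_cases h : s + ((t - p - q : ℕ) : ℤ) = i + k
        · rw [if_pos (by omega), if_pos h]
        · rw [if_neg (by omega), if_neg h, hd.iter_zero, mul_zero, smul_zero]
      · rintro ⟨p', r, q'⟩ hx hne
        rw [mem_degTriples] at hx
        dsimp only at hx
        refine mulTerm_eq_zero hd ?_
        by_cases hp : p' = p
        · refine .inr (.inl (if_neg ?_))
          rintro ⟨-, hq⟩
          dsimp only at hq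
          apply hne
          rw [hp, hq, show r = t - p - q by omega]
        · exact .inl (if_neg fun h => hp h.2)
      · intro h
        rw [mem_degTriples] at h
        dsimp only at h
        omega
    · rw [if_neg fun h => hpq h.1]
      refine Finset.sum_eq_zero fun x hx => mulTerm_eq_zero hd ?_
      rw [mem_degTriples] at hx
      by_cases hp : x.1 = p
      · refine .inr (.inl (if_neg ?_))
        rintro ⟨-, hq⟩
        omega
      · exact .inl (if_neg fun h => hp h.2)
  · intro i' hi' x _
    exact mulTerm_eq_zero hd (.inl (if_neg fun h => hi' (by simp [h.1])))

/-- Operators of weight bounded below, as a subgroup. -/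
def opSubgroup (A : Type*) [CommRing A] (σ : Bool) : AddSubgroup (OpC A) where
  carrier := {a | ∃ m, WeightGE σ m a}
  zero_mem' := ⟨0, fun _ _ _ => rfl⟩
  add_mem' := by
    rintro a b ⟨m, ha⟩ ⟨n, hb⟩
    exact ⟨min m n, (ha.mono (min_le_left _ _)).add (hb.mono (min_le_right _ _))⟩
  neg_mem' := by
    rintro a ⟨m, ha⟩
    exact ⟨m, fun i j h => by rw [Pi.neg_apply, Pi.neg_apply, ha i j h, neg_zero]⟩

/-- The ring of operators `D⁺` (for `σ = true`) or `D⁻` (for `σ = false`), with the product built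
from the derivation `d`. -/
def Op (d : A → A) (_ : IsDeriv d) (σ : Bool) : Type _ := opSubgroup A σ

variable {hd : IsDeriv d} {σ : Bool}

namespace Op

instance : AddCommGroup (Op d hd σ) := inferInstanceAs (AddCommGroup (opSubgroup A σ))

/-- The coefficients of an operator. -/
def val (a : Op d hd σ) : OpC A := Subtype.val a

lemma val_injective : Function.Injective (val : Op d hd σ → OpC A) := Subtype.val_injective

lemma exists_weightGE (a : Op d hd σ) : ∃ m, WeightGE σ m a.val := Subtype.prop a

/-- An operator with given coefficients. -/
def mk (a : OpC A) (h : ∃ m, WeightGE σ m a) : Op d hd σ := ⟨a, h⟩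

@[simp] lemma val_mk (a : OpC A) (h : ∃ m, WeightGE σ m a) : (mk a h : Op d hd σ).val = a := rfl

/-- Taking coefficients, as an additive map. -/
def valHom : Op d hd σ →+ OpC A := (opSubgroup A σ).subtype

lemma val_eq (a : Op d hd σ) : a.val = valHom a := rfl

@[simp] lemma val_zero : (0 : Op d hd σ).val = 0 := rfl
@[simp] lemma val_add (a b : Op d hd σ) : (a + b).val = a.val + b.val := rfl
@[simp] lemma val_sub (a b : Op d hd σ) : (a - b).val = a.val - b.val := rfl
@[simp] lemma val_neg (a : Op d hd σ) : (-a).val = -a.val := rfl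

noncomputable instance : Mul (Op d hd σ) :=
  ⟨fun a b => mk (mulO d a.val b.val) (by
    obtain ⟨m, ha⟩ := a.exists_weightGE
    obtain ⟨n, hb⟩ := b.exists_weightGE
    exact ⟨m + n, ha.mul hd hb⟩)⟩

lemma val_mul (a b : Op d hd σ) : (a * b).val = mulO d a.val b.val := rfl

lemma exists_weightGE₂ (a b : Op d hd σ) : ∃ m, WeightGE σ m a.val ∧ WeightGE σ m b.val := by
  obtain ⟨m, ha⟩ := a.exists_weightGE
  obtain ⟨n, hb⟩ := b.exists_weightGE
  exact ⟨min m n, ha.mono (min_le_left _ _), hb.mono (min_le_right _ _)⟩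

lemma mul_add_aux (a b c : Op d hd σ) : a * (b + c) = a * b + a * c := by
  obtain ⟨m, ha⟩ := a.exists_weightGE
  obtain ⟨n, hb, hc⟩ := exists_weightGE₂ b c
  exact val_injective (mulO_add hd ha hb hc)

lemma add_mul_aux (a b c : Op d hd σ) : (a + b) * c = a * c + b * c := by
  obtain ⟨m, ha, hb⟩ := exists_weightGE₂ a b
  obtain ⟨n, hc⟩ := c.exists_weightGE
  exact val_injective (add_mulO hd ha hb hc)

noncomputable instance : NonUnitalNonAssocRing (Op d hd σ) where
  left_distrib := mul_add_aux
  right_distrib := add_mul_aux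
  zero_mul a := by simpa using add_mul_aux 0 0 a
  mul_zero a := by simpa using mul_add_aux a 0 0

/-- The monomial `x D^i` with `x` in degree `p`. -/
def mono (i : ℤ) (p : ℕ) (x : A) : Op d hd σ := mk (monoO i p x) ⟨_, weightGE_monoO σ i p x⟩

lemma val_sum {ι : Type*} (S : Finset ι) (f : ι → Op d hd σ) (s : ℤ) (t : ℕ) :
    (∑ x ∈ S, f x).val s t = ∑ x ∈ S, (f x).val s t := by
  rw [val_eq, map_sum, Finset.sum_apply, Finset.sum_apply]
  rfl

/-- The expansion of a product of monomials, in degrees `≤ t`. -/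
lemma mono_mul_mono_val (i k : ℤ) (p q : ℕ) (f g : A) (s : ℤ) {t n : ℕ} (ht : t ≤ n) :
    (mono i p f * mono k q g : Op d hd σ).val s t
      = (∑ r ∈ Finset.range (n + 1),
          mono (i + k - r) (p + q + r) (zchoose i r • (f * d^[r] g)) : Op d hd σ).val s t := by
  rw [val_sum, val_mul]
  simp only [mono, val_mk]
  rw [mulO_monoO hd]
  split_ifs with h
  · rw [Finset.sum_eq_single (t - p - q), monoO, if_pos (by omega)]
    · intro r _ hr
      exact if_neg (by omega)
    · intro hr
      rw [Finset.mem_range] at hr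
      omega
  · refine (Finset.sum_eq_zero fun r _ => if_neg ?_).symm
    rintro ⟨h1, h2⟩
    exact h ⟨by omega, by rw [h1, show t - p - q = r by omega]; ring⟩

lemma mono_mul_assoc (i k l : ℤ) (p q v : ℕ) (f g h : A) :
    (mono i p f * mono k q g * mono l v h : Op d hd σ)
      = mono i p f * (mono k q g * mono l v h) := by
  apply val_injective
  funext s t
  have e1 : (mono i p f * mono k q g * mono l v h : Op d hd σ).val s t
      = ((∑ r ∈ Finset.range (t + 1), mono (i + k - r) (p + q + r) (zchoose i r • (f * d^[r] g)))
          * mono l v h : Op d hd σ).val s t :=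
    mulO_congr s t (fun i' j hj => mono_mul_mono_val i k p q f g i' hj) fun _ _ _ => rfl
  have e2 : (mono i p f * (mono k q g * mono l v h) : Op d hd σ).val s t
      = (mono i p f * ∑ y ∈ Finset.range (t + 1),
          mono (k + l - y) (q + v + y) (zchoose k y • (g * d^[y] h)) : Op d hd σ).val s t :=
    mulO_congr s t (fun _ _ _ => rfl) fun i' j hj => mono_mul_mono_val k l q v g h i' hj
  rw [e1, e2, Finset.sum_mul, Finset.mul_sum, val_sum, val_sum]
  simp only [val_mul]
  simp only [mono, val_mk, mulO_monoO hd]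
  by_cases hn : p + q + v ≤ t ∧ s + ((t - p - q - v : ℕ) : ℤ) = i + k + l
  · obtain ⟨n, rfl⟩ := Nat.exists_eq_add_of_le hn.1
    have hsub : Finset.range (n + 1) ⊆ Finset.range (p + q + v + n + 1) := by
      rw [Finset.range_subset_range]; omega
    have h2 := hn.2
    rw [← Finset.sum_subset hsub, ← Finset.sum_subset hsub]
    · have key := monomial_assoc_identity hd i k n f g h
      rw [Finset.Nat.sum_antidiagonal_eq_sum_range_succ
          (fun r u => zchoose (i + k - r) u • ((zchoose i r • (f * d^[r] g)) * d^[u] h)),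
        ← Finset.Nat.sum_antidiagonal_swap] at key
      simp only [Prod.fst_swap, Prod.snd_swap] at key
      rw [Finset.Nat.sum_antidiagonal_eq_sum_range_succ
          (fun y w => zchoose i w • (f * d^[w] (zchoose k y • (g * d^[y] h))))] at key
      refine Eq.trans (Finset.sum_congr rfl fun r hr => ?_)
        (key.trans (Finset.sum_congr rfl fun y hy => ?_))
      · rw [Finset.mem_range] at hr
        rw [if_pos (by omega), show p + q + v + n - (p + q + r) - v = n - r by omega]
      · rw [Finset.mem_range] at hy
        rw [if_pos (by omega), show p + q + v + n - p - (q + v + y) = n - y by omega]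
    · intro y _ hy
      rw [Finset.mem_range] at hy
      exact if_neg (by omega)
    · intro r _ hr
      rw [Finset.mem_range] at hr
      exact if_neg (by omega)
  · rw [Finset.sum_eq_zero fun r _ => if_neg (by omega),
      Finset.sum_eq_zero fun y _ => if_neg (by omega)]

/-- Finite sums of monomials. -/
def fin (d : A → A) (hd : IsDeriv d) (σ : Bool) : AddSubmonoid (Op d hd σ) :=
  AddSubmonoid.closure {a | ∃ i p x, a = mono i p x}

lemma fin_mul_assoc {a b c : Op d hd σ} (ha : a ∈ fin d hd σ) (hb : b ∈ fin d hd σ)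
    (hc : c ∈ fin d hd σ) : a * b * c = a * (b * c) := by
  induction ha using AddSubmonoid.closure_induction with
  | zero => simp
  | add x y _ _ hx hy => simp only [add_mul, hx, hy]
  | mem x hx =>
    obtain ⟨i, p, f, rfl⟩ := hx
    induction hb using AddSubmonoid.closure_induction with
    | zero => simp
    | add x y _ _ hx hy => simp only [add_mul, mul_add, hx, hy]
    | mem x hx =>
      obtain ⟨k, q, g, rfl⟩ := hx
      induction hc using AddSubmonoid.closure_induction with
      | zero => simp
      | add x y _ _ hx hy => simp only [mul_add, hx, hy]
      | mem x hx =>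
        obtain ⟨l, v, h, rfl⟩ := hx
        exact mono_mul_assoc i k l p q v f g h

/-- Only finitely many coefficients have weight less than `M` and degree at most `M`. -/
lemma exists_fin (a : Op d hd σ) (M : ℤ) : ∃ b ∈ fin d hd σ, HighGE σ M (a - b).val := by
  obtain ⟨m, ha⟩ := a.exists_weightGE
  let S : Finset (ℤ × ℕ) :=
    Finset.Icc (-|m| - |M|) (|m| + |M|) ×ˢ Finset.range (M.toNat + 1)
  refine ⟨∑ x ∈ S, mono x.1 x.2 (a.val x.1 x.2),
    sum_mem fun x _ => AddSubmonoid.subset_closure ⟨_, _, _, rfl⟩, fun i j h1 h2 => ?_⟩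
  rw [val_sub, Pi.sub_apply, Pi.sub_apply, val_sum, sub_eq_zero]
  by_cases h3 : opWeight σ i j < m
  · rw [ha i j h3]
    refine (Finset.sum_eq_zero fun x _ => ?_).symm
    simp only [mono, val_mk, monoO]
    split_ifs with h
    · rw [← h.1, ← h.2, ha i j h3]
    · rfl
  · rw [Finset.sum_eq_single (i, j)]
    · simp [mono, monoO]
    · intro x _ hx
      exact if_neg fun h => hx (Prod.ext h.1.symm h.2.symm)
    · intro hx
      refine absurd ?_ hx
      simp only [S, Finset.mem_product, Finset.mem_Icc, Finset.mem_range]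
      have := le_abs_self m
      have := neg_abs_le m
      have := le_abs_self M
      have := neg_abs_le M
      refine ⟨?_, by omega⟩
      cases σ <;> simp [opWeight] at h1 h3 <;> constructor <;> omega

/-- Both triple products are continuous in each factor, in the sense of `HighGE`, so associativity
follows from the case of finite sums of monomials. -/
lemma mul_assoc_aux (a b c : Op d hd σ) : a * b * c = a * (b * c) := by
  apply val_injective
  funext s t
  obtain ⟨N, hN1, hN2⟩ : ∃ N : ℤ, opWeight σ s t < N ∧ (t : ℤ) ≤ N :=
    ⟨max (opWeight σ s t + 1) t, by omega, by omega⟩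
  have high {x : Op d hd σ} (h : HighGE σ N x.val) : x.val s t = 0 := h s t hN1 hN2
  have sub0 {x y : Op d hd σ} (h : (x - y).val s t = 0) : x.val s t = y.val s t := sub_eq_zero.1 h
  obtain ⟨mb, hb⟩ := b.exists_weightGE
  obtain ⟨mc, hc⟩ := c.exists_weightGE
  obtain ⟨a', ha', hA⟩ := a.exists_fin (|N| + |mb| + |mc|)
  obtain ⟨ma, ha⟩ := a'.exists_weightGE
  obtain ⟨b', hb', hB⟩ := b.exists_fin (|N| + |ma| + |mc|)
  obtain ⟨mb', hb2⟩ := b'.exists_weightGE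
  obtain ⟨c', hc', hC⟩ := c.exists_fin (|N| + |ma| + |mb'|)
  have := le_abs_self N
  have := abs_nonneg N
  have := neg_abs_le ma
  have := neg_abs_le mb
  have := neg_abs_le mc
  have := neg_abs_le mb'
  have := abs_nonneg ma
  have := abs_nonneg mb
  have := abs_nonneg mc
  have := abs_nonneg mb'
  have e1 : (a * b * c).val s t = (a' * b * c).val s t := by
    apply sub0
    rw [← sub_mul, ← sub_mul]
    exact high ((hA.mul_right (M' := |N| + |mc|) hd hb (by omega) (by omega)).mul_right hd hc
      (by omega) (by omega))
  have e2 : (a * (b * c)).val s t = (a' * (b * c)).val s t := by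
    apply sub0
    rw [← sub_mul]
    exact high (hA.mul_right hd (hb.mul hd hc) (by omega) (by omega))
  have e3 : (a' * b * c).val s t = (a' * b' * c).val s t := by
    apply sub0
    rw [← sub_mul, ← mul_sub]
    exact high ((HighGE.mul_left (M' := |N| + |mc|) hd ha hB (by omega) (by omega)).mul_right hd hc
      (by omega) (by omega))
  have e4 : (a' * (b * c)).val s t = (a' * (b' * c)).val s t := by
    apply sub0
    rw [← mul_sub, ← sub_mul]
    exact high (HighGE.mul_left (M := |N| + |ma|) hd ha
      (hB.mul_right hd hc (by omega) (by omega)) (by omega) (by omega))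
  have e5 : (a' * b' * c).val s t = (a' * b' * c').val s t := by
    apply sub0
    rw [← mul_sub]
    exact high (HighGE.mul_left hd (ha.mul hd hb2) hC (by omega) (by omega))
  have e6 : (a' * (b' * c)).val s t = (a' * (b' * c')).val s t := by
    apply sub0
    rw [← mul_sub, ← mul_sub]
    exact high (HighGE.mul_left (M := |N| + |ma|) hd ha
      (HighGE.mul_left hd hb2 hC (by omega) (by omega)) (by omega) (by omega))
  rw [e1, e2, e3, e4, e5, e6, fin_mul_assoc ha' hb' hc']

lemma weightGE_oneO (σ : Bool) : WeightGE σ 0 (oneO : OpC A) := fun i j h => by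
  refine if_neg ?_
  rintro ⟨rfl, rfl⟩
  cases σ <;> simp [opWeight] at h

noncomputable instance : One (Op d hd σ) := ⟨mk oneO ⟨0, weightGE_oneO σ⟩⟩

lemma val_one : (1 : Op d hd σ).val = oneO := rfl

lemma one_eq_mono : (1 : Op d hd σ) = mono 0 0 1 := rfl

lemma mono_mul_one (i : ℤ) (p : ℕ) (x : A) : (mono i p x * 1 : Op d hd σ) = mono i p x := by
  apply val_injective
  funext s t
  rw [one_eq_mono, val_mul]
  simp only [mono, val_mk, mulO_monoO hd, monoO]
  by_cases h : s = i ∧ t = p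
  · obtain ⟨rfl, rfl⟩ := h
    simp [zchoose_zero_right]
  · rw [if_neg h]
    split_ifs with h'
    · rw [hd.iter_one (by omega), mul_zero, smul_zero]
    · rfl

lemma one_mul_mono (i : ℤ) (p : ℕ) (x : A) : (1 * mono i p x : Op d hd σ) = mono i p x := by
  apply val_injective
  funext s t
  rw [one_eq_mono, val_mul]
  simp only [mono, val_mk, mulO_monoO hd, monoO]
  by_cases h : s = i ∧ t = p
  · obtain ⟨rfl, rfl⟩ := h
    simp [zchoose_zero_right]
  · rw [if_neg h]
    split_ifs with h'
    · rw [zchoose_eq_zero le_rfl (by omega), zero_smul]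
    · rfl

lemma fin_one_mul {a : Op d hd σ} (ha : a ∈ fin d hd σ) : 1 * a = a ∧ a * 1 = a := by
  induction ha using AddSubmonoid.closure_induction with
  | zero => simp
  | add x y _ _ hx hy => simp only [add_mul, mul_add, hx, hy, and_self]
  | mem x hx =>
    obtain ⟨i, p, f, rfl⟩ := hx
    exact ⟨one_mul_mono i p f, mono_mul_one i p f⟩

lemma one_mul_aux (a : Op d hd σ) : 1 * a = a ∧ a * 1 = a := by
  have sub0 {x y : Op d hd σ} {s : ℤ} {t : ℕ} (h : (x - y).val s t = 0) :
    x.val s t = y.val s t := sub_eq_zero.1 h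
  constructor <;>
  · apply val_injective
    funext s t
    obtain ⟨N, hN1, hN2⟩ : ∃ N : ℤ, opWeight σ s t < N ∧ (t : ℤ) ≤ N :=
      ⟨max (opWeight σ s t + 1) t, by omega, by omega⟩
    obtain ⟨a', ha', hA⟩ := a.exists_fin N
    rw [sub0 (hA s t hN1 hN2)]
    have h := fin_one_mul ha'
    first
    | rw [← congrFun (congrFun (congrArg val h.1) s) t]
      apply sub0
      rw [← mul_sub]
      exact HighGE.mul_left hd (weightGE_oneO σ) hA le_rfl (by omega) s t hN1 hN2
    | rw [← congrFun (congrFun (congrArg val h.2) s) t]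
      apply sub0
      rw [← sub_mul]
      exact HighGE.mul_right hd hA (weightGE_oneO σ) le_rfl (by omega) s t hN1 hN2

noncomputable instance : Ring (Op d hd σ) where
  __ := (inferInstance : NonUnitalNonAssocRing (Op d hd σ))
  mul_assoc := mul_assoc_aux
  one_mul a := (one_mul_aux a).1
  mul_one a := (one_mul_aux a).2

lemma val_pow (a : Op d hd σ) (n : ℕ) : (a ^ n).val = powO d a.val n := by
  induction n with
  | zero => rw [pow_zero]; rfl
  | succ n ih => rw [pow_succ', val_mul, ih]; rfl

end Op

end Ring

/-! ### Residues and dressing -/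

section Residue

variable {A : Type*} [CommRing A] {d : A → A}

lemma WeightGE.posO {σ : Bool} {m : ℤ} {a : OpC A} (h : WeightGE σ m a) :
    WeightGE σ m (posO a) := fun i j hij => by
  rw [_root_.posO, h i j hij, ite_self]

lemma WeightGE.negO {σ : Bool} {m : ℤ} {a : OpC A} (h : WeightGE σ m a) :
    WeightGE σ m (negO a) := fun i j hij => by
  rw [_root_.negO, h i j hij, ite_self]

/-- The differential part of any operator lies in `D⁺`. -/
lemma weightGE_posO (a : OpC A) : WeightGE true 0 (posO a) := fun i j hij => by
  simp only [opWeight, if_true] at hij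
  exact if_neg (by omega)

/-- The negative part of any operator lies in `D⁻`. -/
lemma weightGE_negO (a : OpC A) : WeightGE false 1 (negO a) := fun i j hij => by
  simp only [opWeight] at hij
  exact if_neg (by simp at hij; omega)

lemma posO_add_negO (a : OpC A) : posO a + negO a = a := by
  funext i j
  rw [Pi.add_apply, Pi.add_apply, posO, negO]
  by_cases h : 0 ≤ i
  · rw [if_pos h, if_neg (by omega), add_zero]
  · rw [if_neg h, if_pos (by omega), zero_add]

lemma res_posO_mul_posO (hd : IsDeriv d) (a b : OpC A) (j : ℕ) :
    mulO d (posO a) (posO b) (-1) j = 0 := by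
  refine mulO_eq_zero _ _ _ _ fun i x _ => mulTerm_eq_zero hd ?_
  by_cases h1 : 0 ≤ i
  · by_cases h2 : 0 ≤ -1 + (x.2.1 : ℤ) - i
    · exact .inr (.inr (zchoose_eq_zero h1 (by omega)))
    · exact .inr (.inl (if_neg h2))
  · exact .inl (if_neg h1)

lemma res_negO_mul_negO (hd : IsDeriv d) (a b : OpC A) (j : ℕ) :
    mulO d (negO a) (negO b) (-1) j = 0 := by
  refine mulO_eq_zero _ _ _ _ fun i x _ => mulTerm_eq_zero hd ?_
  by_cases h1 : i < 0
  · exact .inr (.inl (if_neg (by omega)))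
  · exact .inl (if_neg h1)

variable {hd : IsDeriv d} {σ : Bool}

namespace Op

/-- The nonnegative part of an operator. -/
def pos (a : Op d hd σ) : Op d hd σ :=
  mk (posO a.val) (a.exists_weightGE.imp fun _ h => h.posO)

/-- The negative part of an operator. -/
def neg (a : Op d hd σ) : Op d hd σ :=
  mk (negO a.val) (a.exists_weightGE.imp fun _ h => h.negO)

lemma pos_add_neg (a : Op d hd σ) : a.pos + a.neg = a := val_injective (posO_add_negO a.val)

lemma res_pos_mul {X : Op d hd σ} {x : OpC A} (hX : X.val = posO x) (a : Op d hd σ) (j : ℕ) :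
    (X * a).val (-1) j = mulO d (posO x) (negO a.val) (-1) j := by
  conv_lhs => rw [← a.pos_add_neg, mul_add, val_add, Pi.add_apply, Pi.add_apply, val_mul,
    val_mul, hX]
  exact (congrArg (· + _) (res_posO_mul_posO hd _ _ j)).trans (zero_add _)

lemma res_neg_mul {X : Op d hd σ} {x : OpC A} (hX : X.val = negO x) (a : Op d hd σ) (j : ℕ) :
    (X * a).val (-1) j = mulO d (negO x) (posO a.val) (-1) j := by
  conv_lhs => rw [← a.pos_add_neg, mul_add, val_add, Pi.add_apply, Pi.add_apply, val_mul,
    val_mul, hX]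
  exact (congrArg (_ + ·) (res_negO_mul_negO hd _ _ j)).trans (add_zero _)

lemma res_mul_pos {X : Op d hd σ} {x : OpC A} (hX : X.val = posO x) (a : Op d hd σ) (j : ℕ) :
    (a * X).val (-1) j = mulO d (negO a.val) (posO x) (-1) j := by
  conv_lhs => rw [← a.pos_add_neg, add_mul, val_add, Pi.add_apply, Pi.add_apply, val_mul,
    val_mul, hX]
  exact (congrArg (· + _) (res_posO_mul_posO hd _ _ j)).trans (zero_add _)

lemma res_mul_neg {X : Op d hd σ} {x : OpC A} (hX : X.val = negO x) (a : Op d hd σ) (j : ℕ) :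
    (a * X).val (-1) j = mulO d (posO a.val) (negO x) (-1) j := by
  conv_lhs => rw [← a.pos_add_neg, add_mul, val_add, Pi.add_apply, Pi.add_apply, val_mul,
    val_mul, hX]
  exact (congrArg (_ + ·) (res_negO_mul_negO hd _ _ j)).trans (add_zero _)

/-- Vanishing of the residue of the commutator of two commuting operators, in terms of their
nonnegative and negative parts. -/
lemma res_commute {a b : Op d hd σ} (h : Commute a b) (j : ℕ) :
    mulO d (posO a.val) (negO b.val) (-1) j - mulO d (negO b.val) (posO a.val) (-1) j
      = mulO d (posO b.val) (negO a.val) (-1) j - mulO d (negO a.val) (posO b.val) (-1) j := by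
  have h1 : (a * b).val (-1) j = mulO d (posO a.val) (negO b.val) (-1) j
      + mulO d (negO a.val) (posO b.val) (-1) j := by
    conv_lhs => rw [← a.pos_add_neg, add_mul]
    rw [val_add, Pi.add_apply, Pi.add_apply, res_pos_mul rfl, res_neg_mul rfl]
  have h2 : (b * a).val (-1) j = mulO d (posO b.val) (negO a.val) (-1) j
      + mulO d (negO b.val) (posO a.val) (-1) j := by
    conv_lhs => rw [← b.pos_add_neg, add_mul]
    rw [val_add, Pi.add_apply, Pi.add_apply, res_pos_mul rfl, res_neg_mul rfl]
  rw [h.eq, h2] at h1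
  linear_combination -h1

/-- A derivation of the coefficients acting on operators. -/
def map {e : A → A} (he : IsDeriv e) (a : Op d hd σ) : Op d hd σ :=
  mk (opMapO e a.val) (a.exists_weightGE.imp fun _ h i j hij => by
    rw [opMapO, h i j hij, he.map_zero])

lemma map_mul {e : A → A} (he : IsDeriv e) (hed : ∀ x, e (d x) = d (e x)) (a b : Op d hd σ) :
    (a * b).map he = a.map he * b + a * b.map he := by
  obtain ⟨m, ha⟩ := a.exists_weightGE
  obtain ⟨n, hb⟩ := b.exists_weightGE
  exact val_injective (opMapO_mulO hd he hed ha hb)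

lemma map_mono_one {e : A → A} (he : IsDeriv e) (i : ℤ) (p : ℕ) :
    (mono i p 1 : Op d hd σ).map he = 0 := by
  apply val_injective
  funext s t
  change e (if s = i ∧ t = p then 1 else 0) = 0
  split_ifs
  · exact he.map_one
  · exact he.map_zero

/-- If `e φ = B φ`, then `x = φ D^k φ⁻¹` satisfies `e (x ^ n) = [B, x ^ n]`. -/
lemma map_dressed_pow {e : A → A} (he : IsDeriv e) (hed : ∀ x, e (d x) = d (e x))
    {φ φ' B : Op d hd σ} (h1 : φ * φ' = 1) (h2 : φ' * φ = 1) (hB : φ.map he = B * φ) (k : ℤ)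
    (n : ℕ) :
    ((φ * (mono k 0 1 * φ')) ^ n).map he
      = B * (φ * (mono k 0 1 * φ')) ^ n - (φ * (mono k 0 1 * φ')) ^ n * B := by
  have hone : (1 : Op d hd σ).map he = 0 := map_mono_one he 0 0
  have hφ' : φ'.map he = -(φ' * B) := by
    have h := map_mul he hed φ φ'
    rw [h1, hone, hB, mul_assoc, h1, mul_one] at h
    calc φ'.map he = φ' * φ * φ'.map he := by rw [h2, one_mul]
      _ = φ' * (B + φ * φ'.map he) - φ' * B := by noncomm_ring
      _ = -(φ' * B) := by rw [← h]; noncomm_ring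
  have hx : (φ * (mono k 0 1 * φ')).map he
      = B * (φ * (mono k 0 1 * φ')) - (φ * (mono k 0 1 * φ')) * B := by
    rw [map_mul he hed, map_mul he hed, map_mono_one, hB, hφ']
    noncomm_ring
  induction n with
  | zero => rw [pow_zero, hone]; noncomm_ring
  | succ n ih =>
    rw [pow_succ, map_mul he hed, ih, hx]
    noncomm_ring

lemma mono_mul_mono_inv (k : ℤ) : (mono k 0 1 * mono (-k) 0 1 : Op d hd σ) = 1 := by
  apply val_injective
  funext s t
  rw [one_eq_mono, val_mul]
  simp only [mono, val_mk, mulO_monoO hd, monoO]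
  by_cases h : s = 0 ∧ t = 0
  · obtain ⟨rfl, rfl⟩ := h
    simp [zchoose_zero_right]
  · rw [if_neg h]
    split_ifs with h'
    · rw [hd.iter_one (by omega), mul_zero, smul_zero]
    · rfl

/-- The dressed operators `φ D^k φ⁻¹` and `φ D^{-k} φ⁻¹` are inverse to each other. -/
lemma dressed_mul_dressed {φ φ' : Op d hd σ} (h1 : φ * φ' = 1) (h2 : φ' * φ = 1) (k : ℤ) :
    φ * (mono k 0 1 * φ') * (φ * (mono (-k) 0 1 * φ')) = 1 := by
  calc φ * (mono k 0 1 * φ') * (φ * (mono (-k) 0 1 * φ'))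
      = φ * (mono k 0 1 * (φ' * φ) * mono (-k) 0 1) * φ' := by simp only [mul_assoc]
    _ = 1 := by rw [h2, mul_one, mono_mul_mono_inv, mul_one, h1]

end Op

end Residue

/-! ### Closedness of the one-form -/

/-- for a solution of the two-component BKP hierarchy in Lax form
(`∂Φ/∂t_k = -(P^k)₋Φ`, `∂Ψ/∂t_k = ((P^k)₊ - δ_{k1}Q^{-1})Ψ`, `∂Φ/∂t̂_k = -(Q^k)₋Φ`,
`∂Ψ/∂t̂_k = (Q^k)₊Ψ`, `k = 2a+1` odd), the 1-form
`ω = ∑ (res(P^k) dt_k + res(Q^k) dt̂_k)` is closed: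
`∂_{t_l} res P^k = ∂_{t_k} res P^l`, `∂_{t̂_l} res P^k = ∂_{t_k} res Q^l`,
`∂_{t̂_l} res Q^k = ∂_{t̂_k} res Q^l`. -/
theorem bkp_one_form_closed {A : Type*} [CommRing A]
    (𝒜 : ℕ → AddSubgroup A) (d : A → A) (hd : IsDeriv d)
    (hmul : ∀ (i j : ℕ) (x y : A), x ∈ 𝒜 i → y ∈ 𝒜 j → x * y ∈ 𝒜 (i + j))
    (hdeg : ∀ (i : ℕ) (x : A), x ∈ 𝒜 i → d x ∈ 𝒜 (i + 1))
    (Φ Φinv Ψ Ψinv : OpC A)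
    (hΦg : IsGradedO 𝒜 Φ) (hΦig : IsGradedO 𝒜 Φinv)
    (hΨg : IsGradedO 𝒜 Ψ) (hΨig : IsGradedO 𝒜 Ψinv)
    (hΦm : InMinusO Φ) (hΦim : InMinusO Φinv)
    (hΨp : InPlusO Ψ) (hΨip : InPlusO Ψinv)
    (hΦ1 : ∀ j, Φ 0 j = unitC j) (hΦtop : ∀ (i : ℤ) (j : ℕ), 0 < i → Φ i j = 0)
    (hΨ1 : ∀ j, Ψ 0 j = unitC j) (hΨd : IsDiffOpO Ψ) (hΨid : IsDiffOpO Ψinv)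
    (hΦi : mulO d Φ Φinv = oneO ∧ mulO d Φinv Φ = oneO)
    (hΨi : mulO d Ψ Ψinv = oneO ∧ mulO d Ψinv Ψ = oneO)
    (hΦadj : adjO d Φ = mulO d DopO (mulO d Φinv DinvO))
    (hΨadj : adjO d Ψ = mulO d DopO (mulO d Ψinv DinvO))
    -- the time flows, `T a` for `t_{2a+1}` and `That a` for `t̂_{2a+1}`
    (T That : ℕ → A → A)
    (hTder : ∀ a, IsDeriv (T a)) (hThatder : ∀ a, IsDeriv (That a))
    (hTd : ∀ a x, T a (d x) = d (T a x)) (hThatd : ∀ a x, That a (d x) = d (That a x))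
    (hΦT : ∀ a, opMapO (T a) Φ
      = fun s t => -(mulO d (negO (powO d (mulO d Φ (mulO d DopO Φinv)) (2 * a + 1))) Φ s t))
    (hΨT : ∀ a, opMapO (T a) Ψ
      = fun s t => mulO d (posO (powO d (mulO d Φ (mulO d DopO Φinv)) (2 * a + 1))) Ψ s t
          - (if a = 0 then mulO d (mulO d Ψ (mulO d DopO Ψinv)) Ψ s t else 0))
    (hΦH : ∀ a, opMapO (That a) Φ
      = fun s t => -(mulO d (negO (powO d (mulO d Ψ (mulO d DinvO Ψinv)) (2 * a + 1))) Φ s t))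
    (hΨH : ∀ a, opMapO (That a) Ψ
      = fun s t => mulO d (posO (powO d (mulO d Ψ (mulO d DinvO Ψinv)) (2 * a + 1))) Ψ s t) :
    ∀ (a b : ℕ) (j : ℕ),
      T b (powO d (mulO d Φ (mulO d DopO Φinv)) (2 * a + 1) (-1) j)
        = T a (powO d (mulO d Φ (mulO d DopO Φinv)) (2 * b + 1) (-1) j)
      ∧ That b (powO d (mulO d Φ (mulO d DopO Φinv)) (2 * a + 1) (-1) j)
        = T a (powO d (mulO d Ψ (mulO d DinvO Ψinv)) (2 * b + 1) (-1) j)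
      ∧ That b (powO d (mulO d Ψ (mulO d DinvO Ψinv)) (2 * a + 1) (-1) j)
        = That a (powO d (mulO d Ψ (mulO d DinvO Ψinv)) (2 * b + 1) (-1) j) := by
  have exΦ := (inMinusO_iff Φ).1 hΦm
  have exΦ' := (inMinusO_iff Φinv).1 hΦim
  have exΨ := (inPlusO_iff Ψ).1 hΨp
  have exΨ' := (inPlusO_iff Ψinv).1 hΨip
  let φ : Op d hd false := Op.mk Φ exΦ
  let φ' : Op d hd false := Op.mk Φinv exΦ'
  let ψ : Op d hd true := Op.mk Ψ exΨ
  let ψ' : Op d hd true := Op.mk Ψinv exΨ'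
  have hφ1 : φ * φ' = 1 := Op.val_injective hΦi.1
  have hφ2 : φ' * φ = 1 := Op.val_injective hΦi.2
  have hψ1 : ψ * ψ' = 1 := Op.val_injective hΨi.1
  have hψ2 : ψ' * ψ = 1 := Op.val_injective hΨi.2
  let P : Op d hd false := φ * (Op.mono 1 0 1 * φ')
  let Q : Op d hd true := ψ * (Op.mono (-1) 0 1 * ψ')
  let W : Op d hd true := ψ * (Op.mono 1 0 1 * ψ')
  have hWQ : Commute W Q := by
    have h := Op.dressed_mul_dressed hψ1 hψ2 (-1)
    rw [neg_neg] at h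
    exact (Op.dressed_mul_dressed hψ1 hψ2 1).trans h.symm
  have hP : ∀ n, powO d (mulO d Φ (mulO d DopO Φinv)) n = (P ^ n).val :=
    fun n => (Op.val_pow P n).symm
  have hQ : ∀ n, powO d (mulO d Ψ (mulO d DinvO Ψinv)) n = (Q ^ n).val :=
    fun n => (Op.val_pow Q n).symm
  simp only [hP] at hΦT hΨT ⊢
  simp only [hQ] at hΦH hΨH ⊢
  -- A flow `e Φ = -z₋ Φ` changes `res (P ^ n)` by `res [(P ^ n)₊, z₋]`.
  have resP : ∀ (e : A → A), IsDeriv e → (∀ x, e (d x) = d (e x)) → ∀ z : OpC A,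
      (opMapO e Φ = fun s t => -(mulO d (negO z) Φ s t)) → ∀ n j,
      e ((P ^ n).val (-1) j) = mulO d (posO (P ^ n).val) (negO z) (-1) j
        - mulO d (negO z) (posO (P ^ n).val) (-1) j := by
    intro e he hed z hz n j
    let N : Op d hd false := Op.mk (negO z) ⟨1, weightGE_negO z⟩
    have hB : φ.map he = -N * φ := by
      rw [neg_mul]
      exact Op.val_injective hz
    have key : (P ^ n).map he = -N * P ^ n - P ^ n * -N :=
      Op.map_dressed_pow he hed hφ1 hφ2 hB 1 n
    have h := congrFun (congrFun (congrArg Op.val key) (-1)) j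
    rw [neg_mul, mul_neg, sub_neg_eq_add, Op.val_add, Op.val_neg, Pi.add_apply, Pi.add_apply,
      Pi.neg_apply, Pi.neg_apply, Op.res_neg_mul (x := z) rfl, Op.res_mul_neg (x := z) rfl] at h
    exact h.trans (by ring)
  -- A flow `e Ψ = (z₊ - C) Ψ` with `C` commuting with `Q` changes `res (Q ^ n)` by
  -- `res [z₊, (Q ^ n)₋]`.
  have resQ : ∀ (e : A → A), IsDeriv e → (∀ x, e (d x) = d (e x)) → ∀ (z : OpC A)
      (C : Op d hd true), Commute C Q →
      (opMapO e Ψ = fun s t => mulO d (posO z) Ψ s t - (C * ψ).val s t) → ∀ n j,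
      e ((Q ^ n).val (-1) j) = mulO d (posO z) (negO (Q ^ n).val) (-1) j
        - mulO d (negO (Q ^ n).val) (posO z) (-1) j := by
    intro e he hed z C hC hz n j
    let N : Op d hd true := Op.mk (posO z) ⟨0, weightGE_posO z⟩
    have hB : ψ.map he = (N - C) * ψ := by
      rw [sub_mul]
      exact Op.val_injective hz
    have key : (Q ^ n).map he = (N - C) * Q ^ n - Q ^ n * (N - C) :=
      Op.map_dressed_pow he hed hψ1 hψ2 hB (-1) n
    rw [sub_mul, mul_sub, (hC.pow_right n).eq, sub_sub_sub_cancel_right] at key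
    have h := congrFun (congrFun (congrArg Op.val key) (-1)) j
    rw [Op.val_sub, Pi.sub_apply, Pi.sub_apply, Op.res_pos_mul (x := z) rfl,
      Op.res_mul_pos (x := z) rfl] at h
    exact h
  have hΨT' : ∀ a, ∃ C : Op d hd true, Commute C Q ∧ opMapO (T a) Ψ
      = fun s t => mulO d (posO (P ^ (2 * a + 1)).val) Ψ s t - (C * ψ).val s t := by
    intro a
    by_cases ha : a = 0
    · refine ⟨W, hWQ, (hΨT a).trans ?_⟩
      simp only [if_pos ha]
      rfl
    · refine ⟨0, Commute.zero_left Q, (hΨT a).trans ?_⟩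
      simp only [if_neg ha, zero_mul]
      rfl
  have hΨH' : ∀ a, opMapO (That a) Ψ = fun s t =>
      mulO d (posO (Q ^ (2 * a + 1)).val) Ψ s t - ((0 : Op d hd true) * ψ).val s t := by
    intro a
    refine (hΨH a).trans ?_
    simp only [zero_mul, Op.val_zero, Pi.zero_apply, sub_zero]
  intro a b j
  obtain ⟨C, hC, hCT⟩ := hΨT' a
  refine ⟨?_, ?_, ?_⟩
  · rw [resP (T b) (hTder b) (hTd b) _ (hΦT b), resP (T a) (hTder a) (hTd a) _ (hΦT a)]
    exact Op.res_commute ((Commute.refl P).pow_pow _ _) j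
  · rw [resP (That b) (hThatder b) (hThatd b) _ (hΦH b),
      resQ (T a) (hTder a) (hTd a) _ C hC hCT]
  · rw [resQ (That b) (hThatder b) (hThatd b) _ 0 (Commute.zero_left Q) (hΨH' b),
      resQ (That a) (hThatder a) (hThatd a) _ 0 (Commute.zero_left Q) (hΨH' a)]
    exact Op.res_commute ((Commute.refl Q).pow_pow _ _) j
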